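/- Optimality gap lower-bounds accuracy: assume σ has full support and let δ ∈ (0,1). Fix a prior policy φ ∈ M and define the optimality gap G(φ;π*) := −2χ_φ(π*) + log₂ e. Let π̂ be a maximizer over all d-policies of α_train(π;π*) − √((−2χ_φ(π) + log₂ e + log₂(1/δ))/(2N)). Then with probability at least 1−δ over the i.i.d. uniform draw of the training contexts, α(π̂;π*) ≥ 1 − √((2·G(φ;π*) + 2·log₂(1/δ))/N). -/

import Mathlib

open Finset

/-- A learning system: a commutative additive monoid `M` of stochastic policies,
a finite nonempty set `S` of contexts, a finite nonempty behavior set `A s` for each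
context `s`, and an inference function `inf` assigning to each policy and context a
probability mass function on the behaviors of that context, satisfying the chain rule. -/
structure LearningSystem (M : Type) [AddCommMonoid M] (S : Type) [Fintype S] [DecidableEq S] :
    Type where
  A : S → Finset M
  A_nonempty : ∀ s, (A s).Nonempty
  inf : M → S → M → ℝ
  inf_nonneg : ∀ φ s a, 0 ≤ inf φ s a
  inf_eq_zero_of_not_mem : ∀ φ s a, a ∉ A s → inf φ s a = 0
  inf_sum_one : ∀ φ s, ∑ a ∈ A s, inf φ s a = 1
  chain_rule : ∀ (φ : M) (s₁ s₂ : S) (a₁ a₂ : M), a₁ ∈ A s₁ → a₂ ∈ A s₂ →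
    inf φ s₁ a₁ * inf (φ + a₁) s₂ a₂ = inf φ s₂ a₂ * inf (φ + a₂) s₁ a₁

namespace LearningSystem

variable {M S : Type} [AddCommMonoid M] [Fintype S] [DecidableEq S]

/-- A deterministic policy (d-policy): an assignment of a behavior `π s ∈ A s` to
every context `s ∈ S`. -/
abbrev DPolicy (L : LearningSystem M S) : Type := ∀ s : S, {a : M // a ∈ L.A s}

/-- `σ` has full support: every behavior of every context has positive probability
under every prior policy. -/
def FullSupport (L : LearningSystem M S) : Prop :=
  ∀ (φ : M) (s : S) (a : M), a ∈ L.A s → 0 < L.inf φ s a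

/-- The coherence of a d-policy `π` relative to the prior policy `φ`, computed along
the enumeration `f` of contexts:
`∑ n, log₂ σ(φ + ∑_{m<n} π(f m), f n)(π (f n))`. -/
noncomputable def cohAlong (L : LearningSystem M S) (φ : M) (π : L.DPolicy)
    {k : ℕ} (f : Fin k → S) : ℝ :=
  ∑ n : Fin k, Real.logb 2
    (L.inf (φ + ∑ m ∈ Finset.univ.filter (fun m => m < n), ((π (f m) : M)))
      (f n) ((π (f n) : M)))

/-- The product `∏ n, σ(φ + ∑_{m<n} π(f m), f n)(π (f n))` along the enumeration `f`. -/
noncomputable def prodAlong (L : LearningSystem M S) (φ : M) (π : L.DPolicy)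
    {k : ℕ} (f : Fin k → S) : ℝ :=
  ∏ n : Fin k,
    L.inf (φ + ∑ m ∈ Finset.univ.filter (fun m => m < n), ((π (f m) : M)))
      (f n) ((π (f n) : M))

/-- Accuracy of `π` with respect to the ground truth `πs`:
`α(π;π*) = (1/|S|) ∑_{s∈S} 1[π(s) = π*(s)]`. -/
noncomputable def accuracy [DecidableEq M] (L : LearningSystem M S)
    (π πs : L.DPolicy) : ℝ :=
  (∑ s : S, if (π s : M) = ((πs s : M)) then (1 : ℝ) else 0) / (Fintype.card S : ℝ)

/-- Training accuracy of `π` on the training contexts `shat`: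
`α_train(π;π*) = (1/N) ∑_i 1[π(ŝ_i) = π*(ŝ_i)]`. -/
noncomputable def trainAccuracy [DecidableEq M] (L : LearningSystem M S) {N : ℕ}
    (shat : Fin N → S) (π πs : L.DPolicy) : ℝ :=
  (∑ i : Fin N, if (π (shat i) : M) = ((πs (shat i) : M)) then (1 : ℝ) else 0) / (N : ℝ)

end LearningSystem

/-!
For a single d-policy `π`, Hoeffding's inequality bounds by `exp (-c π)` the probability that the
training accuracy exceeds the accuracy by at least `√(c π / (2N))`. The numbers
`2 ^ χ_φ(π) = ∏ n, σ(φ + ∑_{m<n} π(s_m), s_n)(π(s_n))` form a probability distribution on the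
d-policies, since once `π(s₁)` is fixed the remaining factors form the same product for the prior
`φ + π(s₁)` over one context fewer. Hence the complexities
`c π = -2 χ_φ(π) + log₂ e + log₂ (1/δ)` satisfy the Kraft-type inequality `∑ π, exp (-c π) ≤ δ`.
A union bound makes the accuracy estimate hold simultaneously for all d-policies; it is applied to
`π̂`, whose regularized training accuracy is at least that of `π*`, and the training accuracy of
`π*` is `1`.
-/

open MeasureTheory ProbabilityTheory

section Concentration

variable {Ω ι : Type*} [MeasurableSpace Ω] {ν : Measure Ω} [IsProbabilityMeasure ν]
  [Fintype ι] [Nonempty ι]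

theorem measureReal_pi_integral_add_le_average_le {X : Ω → ℝ} {a b : ℝ} (hX : AEMeasurable X ν)
    (hab : ∀ᵐ ω ∂ν, X ω ∈ Set.Icc a b) {t : ℝ} (ht : 0 ≤ t) :
    (Measure.pi fun _ : ι => ν).real
        {w | ∫ ω, X ω ∂ν + t ≤ (∑ i, X (w i)) / Fintype.card ι} ≤
      Real.exp (-(2 * Fintype.card ι * t ^ 2 / (b - a) ^ 2)) := by
  have hcard : (0 : ℝ) < Fintype.card ι := by exact_mod_cast Fintype.card_pos
  have hindep : iIndepFun (fun i (w : ι → Ω) => X (w i) - ∫ ω, X ω ∂ν)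
      (Measure.pi fun _ : ι => ν) :=
    iIndepFun_pi (X := fun _ ω => X ω - ∫ ω, X ω ∂ν) fun _ => hX.sub_const _
  have hsubG (i : ι) : HasSubgaussianMGF (fun w : ι → Ω => X (w i) - ∫ ω, X ω ∂ν)
      ((‖b - a‖₊ / 2) ^ 2) (Measure.pi fun _ : ι => ν) := by
    have heval := measurePreserving_eval (fun _ : ι => ν) i
    refine HasSubgaussianMGF.of_map heval.measurable.aemeasurable
      (X := fun ω => X ω - ∫ ω, X ω ∂ν) ?_
    rw [heval.map_eq]
    exact hasSubgaussianMGF_of_mem_Icc hX hab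
  have hevent : {w : ι → Ω | ∫ ω, X ω ∂ν + t ≤ (∑ i, X (w i)) / Fintype.card ι} =
      {w | Fintype.card ι * t ≤ ∑ i, (X (w i) - ∫ ω, X ω ∂ν)} := by
    ext w
    simp only [Set.mem_ofPred_eq, Finset.sum_sub_distrib, Finset.sum_const, Finset.card_univ,
      nsmul_eq_mul, le_div_iff₀ hcard, le_sub_iff_add_le]
    ring_nf
  rw [hevent]
  convert HasSubgaussianMGF.measure_sum_ge_le_of_iIndepFun hindep (s := Finset.univ)
    (fun i _ => hsubG i) (ε := Fintype.card ι * t) (by positivity) using 2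
  push_cast
  simp only [Finset.sum_const, Finset.card_univ, nsmul_eq_mul, div_pow,
    Real.norm_eq_abs, sq_abs]
  field_simp

theorem measureReal_pi_exists_integral_add_sqrt_le_average_le {H : Type*} [Fintype H]
    {X : H → Ω → ℝ} (hX : ∀ h, AEMeasurable (X h) ν)
    (hX01 : ∀ h, ∀ᵐ ω ∂ν, X h ω ∈ Set.Icc 0 1) (c : H → ℝ) :
    (Measure.pi fun _ : ι => ν).real
        {w | ∃ h, ∫ ω, X h ω ∂ν + √(c h / (2 * Fintype.card ι)) ≤
          (∑ i, X h (w i)) / Fintype.card ι} ≤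
      ∑ h, Real.exp (-c h) := by
  rw [Set.ofPred_exists]
  refine (measureReal_iUnion_fintype_le _).trans (Finset.sum_le_sum fun h _ => ?_)
  refine (measureReal_pi_integral_add_le_average_le (hX h) (hX01 h)
    (Real.sqrt_nonneg _)).trans (Real.exp_le_exp.2 (neg_le_neg ?_))
  have hsq : c h / (2 * Fintype.card ι) ≤ √(c h / (2 * Fintype.card ι)) ^ 2 := by
    rw [Real.sq_sqrt']
    exact le_max_left _ _
  rwa [sub_zero, one_pow, div_one, ← div_le_iff₀' (by positivity)]

end Concentration

section Counting

variable {Ω : Type*} [Fintype Ω] [MeasurableSpace Ω] [MeasurableSingletonClass Ω]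

theorem integral_uniformOn_univ (f : Ω → ℝ) :
    ∫ ω, f ω ∂uniformOn Set.univ = (∑ ω, f ω) / Fintype.card Ω := by
  rw [uniformOn, ProbabilityTheory.cond, integral_smul_measure, Measure.restrict_univ,
    integral_count]
  simp [div_eq_inv_mul]

theorem measureReal_pi_uniformOn_univ_setOf {ι : Type*} [Fintype ι] (p : (ι → Ω) → Prop) :
    (Measure.pi fun _ : ι => uniformOn (Set.univ : Set Ω)).real {w | p w} =
      Nat.card {w // p w} / (Fintype.card Ω : ℝ) ^ Fintype.card ι := by
  classical
  rw [← uniformOn_pi, Set.pi_univ, measureReal_def, uniformOn_univ,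
    Measure.count_apply_finite _ (Set.toFinite _), ← Nat.card_eq_card_finite_toFinset]
  simp only [ENNReal.toReal_div, ENNReal.toReal_natCast, Fintype.card_fun, Nat.cast_pow]
  rfl

end Counting

theorem sum_pi_prod_eq_one {R M : Type*} [CommSemiring R] [AddCommMonoid M] {k : ℕ}
    {B : Fin k → Type*} [∀ n, Fintype (B n)] (v : ∀ n, B n → M) (p : M → ∀ n, B n → R)
    (hp : ∀ φ n, ∑ b, p φ n b = 1) (φ : M) :
    ∑ ρ : ∀ n, B n, ∏ n, p (φ + ∑ m with m < n, v m (ρ m)) n (ρ n) = 1 := by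
  induction k generalizing φ with
  | zero => simp
  | succ k ih =>
    have hcons (b : B 0) (ρ : ∀ n : Fin k, B n.succ) :
        ∏ n, p (φ + ∑ m with m < n, v m (Fin.consEquiv B (b, ρ) m)) n (Fin.consEquiv B (b, ρ) n) =
          p φ 0 b *
            ∏ n, p (φ + v 0 b + ∑ m with m < n, v m.succ (ρ m)) n.succ (ρ n) := by
      simp [Fin.consEquiv, Fin.prod_univ_succ, Finset.sum_filter, Fin.sum_univ_succ, add_assoc]
    have htail (b : B 0) := ih (fun n => v n.succ) (fun φ n => p φ n.succ)
      (fun φ n => hp φ n.succ) (φ + v 0 b)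
    rw [← Equiv.sum_comp (Fin.consEquiv B), Fintype.sum_prod_type]
    simp only [hcons, ← Finset.mul_sum, htail, mul_one, hp]

theorem log_le_logb_of_one_le {b x : ℝ} (hb : 1 < b) (hbe : b ≤ Real.exp 1) (hx : 1 ≤ x) :
    Real.log x ≤ Real.logb b x := by
  have hlogb : Real.log b ≤ 1 := (Real.log_le_iff_le_exp (by linarith)).2 hbe
  exact le_div_self (Real.log_nonneg hx) (Real.log_pos hb) hlogb

namespace LearningSystem

variable {M S : Type} [AddCommMonoid M] [Fintype S] [DecidableEq S]

/-- The optimality gap `G(φ;π) = −2χ_φ(π) + log₂ e`, with the coherence computed along the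
enumeration `f` of the contexts. -/
noncomputable def optimalityGap (L : LearningSystem M S) (φ : M) {k : ℕ} (f : Fin k → S)
    (π : L.DPolicy) : ℝ :=
  -2 * L.cohAlong φ π f + Real.logb 2 (Real.exp 1)

/-- The regularizer `√((G(φ;π) + log₂(1/δ)) / (2N))` subtracted from the training accuracy of `π`
on `N` contexts; up to it, the accuracy is at least the training accuracy with confidence
`1 - δ`. -/
noncomputable def penalty (L : LearningSystem M S) (φ : M) {k : ℕ} (f : Fin k → S) (N : ℕ) (δ : ℝ)
    (π : L.DPolicy) : ℝ :=
  √((L.optimalityGap φ f π + Real.logb 2 (1 / δ)) / (2 * N))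

variable (L : LearningSystem M S) (φ : M) {k : ℕ}

theorem penalty_le_sqrt (f : Fin k → S) (N : ℕ) (δ : ℝ) (π : L.DPolicy) :
    L.penalty φ f N δ π ≤ √((2 * L.optimalityGap φ f π + 2 * Real.logb 2 (1 / δ)) / N) := by
  have hfour : (2 * L.optimalityGap φ f π + 2 * Real.logb 2 (1 / δ)) / N =
      4 * ((L.optimalityGap φ f π + Real.logb 2 (1 / δ)) / (2 * N)) := by
    ring
  rw [hfour, Real.sqrt_mul zero_le_four]
  exact le_mul_of_one_le_left (Real.sqrt_nonneg _) (Real.one_le_sqrt.2 (by norm_num))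

theorem trainAccuracy_self [DecidableEq M] {N : ℕ} (hN : N ≠ 0) (shat : Fin N → S)
    (π : L.DPolicy) : L.trainAccuracy shat π π = 1 := by
  simp [trainAccuracy, hN]

theorem sum_prodAlong_eq_one (e : Fin k ≃ S) : ∑ π : L.DPolicy, L.prodAlong φ π e = 1 := by
  rw [← Equiv.sum_comp (Equiv.piCongrLeft (fun s => {a : M // a ∈ L.A s}) e)]
  simp only [prodAlong, Equiv.piCongrLeft_apply_apply]
  refine sum_pi_prod_eq_one (fun n (a : {a : M // a ∈ L.A (e n)}) => (a : M))
    (fun φ n a => L.inf φ (e n) a) (fun φ n => ?_) φ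
  rw [Finset.univ_eq_attach, Finset.sum_attach (L.A (e n)) (L.inf φ (e n))]
  exact L.inf_sum_one φ (e n)

theorem prodAlong_nonneg (π : L.DPolicy) (f : Fin k → S) : 0 ≤ L.prodAlong φ π f :=
  Finset.prod_nonneg fun _ _ => L.inf_nonneg _ _ _

theorem prodAlong_le_one (e : Fin k ≃ S) (π : L.DPolicy) : L.prodAlong φ π e ≤ 1 := by
  rw [← L.sum_prodAlong_eq_one φ e]
  exact Finset.single_le_sum (f := fun π => L.prodAlong φ π e)
    (fun π _ => L.prodAlong_nonneg φ π e) (Finset.mem_univ π)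

variable {L}

theorem FullSupport.prodAlong_pos (hL : L.FullSupport) (π : L.DPolicy) (f : Fin k → S) :
    0 < L.prodAlong φ π f :=
  Finset.prod_pos fun n _ => hL _ _ _ (π (f n)).2

theorem FullSupport.cohAlong_eq_logb_prodAlong (hL : L.FullSupport) (π : L.DPolicy)
    (f : Fin k → S) : L.cohAlong φ π f = Real.logb 2 (L.prodAlong φ π f) :=
  (Real.logb_prod _ _ fun n _ => (hL _ _ _ (π (f n)).2).ne').symm

theorem FullSupport.neg_log_prodAlong_le_optimalityGap (hL : L.FullSupport) (e : Fin k ≃ S)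
    (π : L.DPolicy) : -Real.log (L.prodAlong φ π e) ≤ L.optimalityGap φ e π := by
  have hpos := hL.prodAlong_pos φ π e
  have hinv : 1 ≤ (L.prodAlong φ π e)⁻¹ := (one_le_inv₀ hpos).2 (L.prodAlong_le_one φ e π)
  have hlog := log_le_logb_of_one_le one_lt_two Real.exp_one_gt_two.le hinv
  have hnonneg : 0 ≤ Real.log (L.prodAlong φ π e)⁻¹ := Real.log_nonneg hinv
  have he : 0 ≤ Real.logb 2 (Real.exp 1) :=
    Real.logb_nonneg one_lt_two (Real.one_le_exp zero_le_one)
  rw [Real.logb_inv] at hlog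
  rw [optimalityGap, hL.cohAlong_eq_logb_prodAlong, ← Real.log_inv]
  linarith

theorem FullSupport.sum_exp_neg_optimalityGap_le (hL : L.FullSupport) (e : Fin k ≃ S) {δ : ℝ}
    (hδ0 : 0 < δ) (hδ1 : δ ≤ 1) :
    ∑ π : L.DPolicy, Real.exp (-(L.optimalityGap φ e π + Real.logb 2 (1 / δ))) ≤ δ := by
  have hlogδ : Real.log (1 / δ) ≤ Real.logb 2 (1 / δ) :=
    log_le_logb_of_one_le one_lt_two Real.exp_one_gt_two.le ((one_le_div hδ0).2 hδ1)
  rw [one_div, Real.log_inv] at hlogδ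
  calc ∑ π : L.DPolicy, Real.exp (-(L.optimalityGap φ e π + Real.logb 2 (1 / δ)))
      ≤ ∑ π : L.DPolicy, Real.exp (Real.log (L.prodAlong φ π e) + Real.log δ) := by
        gcongr with π
        rw [one_div]
        linarith [hL.neg_log_prodAlong_le_optimalityGap φ e π]
    _ = ∑ π : L.DPolicy, L.prodAlong φ π e * δ := by
        simp only [Real.exp_add, Real.exp_log (hL.prodAlong_pos φ _ _), Real.exp_log hδ0]
    _ = δ := by rw [← Finset.sum_mul, L.sum_prodAlong_eq_one φ e, one_mul]

theorem FullSupport.le_measureReal_forall_trainAccuracy_sub_penalty_le [DecidableEq M]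
    [Nonempty S] [MeasurableSpace S] [MeasurableSingletonClass S] (hL : L.FullSupport)
    (e : Fin k ≃ S) (πs : L.DPolicy) {N : ℕ} (hN : N ≠ 0) {δ : ℝ} (hδ0 : 0 < δ) (hδ1 : δ ≤ 1) :
    1 - δ ≤ (Measure.pi fun _ : Fin N => uniformOn (Set.univ : Set S)).real
      {shat | ∀ π, L.trainAccuracy shat π πs - L.penalty φ e N δ π ≤ L.accuracy π πs} := by
  have : NeZero N := ⟨hN⟩
  set μ := Measure.pi fun _ : Fin N => uniformOn (Set.univ : Set S)
  set good := {shat : Fin N → S |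
    ∀ π, L.trainAccuracy shat π πs - L.penalty φ e N δ π ≤ L.accuracy π πs}
  suffices hbad : μ.real goodᶜ ≤ δ by
    rw [probReal_compl_eq_one_sub (Set.toFinite _).measurableSet] at hbad
    linarith
  have hoccam := measureReal_pi_exists_integral_add_sqrt_le_average_le (ι := Fin N)
    (ν := uniformOn (Set.univ : Set S))
    (X := fun (π : L.DPolicy) s => if (π s : M) = πs s then (1 : ℝ) else 0)
    (fun _ => (measurable_of_finite _).aemeasurable)
    (fun _ => .of_forall fun s => by split_ifs <;> simp)
    (fun π => L.optimalityGap φ e π + Real.logb 2 (1 / δ))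
  simp only [integral_uniformOn_univ, Fintype.card_fin] at hoccam
  refine le_trans (measureReal_mono fun shat hshat => ?_)
    (hoccam.trans (hL.sum_exp_neg_optimalityGap_le φ e hδ0 hδ1))
  obtain ⟨π, hπ⟩ := not_forall.1 hshat
  exact ⟨π, (lt_sub_iff_add_lt.1 (not_le.1 hπ)).le⟩

end LearningSystem

theorem optimality_gap_lower_bounds_accuracy_general {M S : Type} [AddCommMonoid M]
    [DecidableEq M] [Fintype S] [DecidableEq S] [Nonempty S] (L : LearningSystem M S)
    (hfs : L.FullSupport) (φ : M) {k : ℕ} (e : Fin k ≃ S) (πs : L.DPolicy)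
    {N : ℕ} (hN : N ≠ 0) {δ : ℝ} (hδ0 : 0 < δ) (hδ1 : δ ≤ 1) (pihat : (Fin N → S) → L.DPolicy)
    (hpihat : ∀ shat, L.trainAccuracy shat πs πs - L.penalty φ e N δ πs ≤
      L.trainAccuracy shat (pihat shat) πs - L.penalty φ e N δ (pihat shat)) :
    1 - δ ≤
      (Nat.card {shat : Fin N → S //
          1 - L.penalty φ e N δ πs ≤ L.accuracy (pihat shat) πs} : ℝ) /
        ((Fintype.card S : ℝ) ^ N) := by
  let _ : MeasurableSpace S := ⊤
  have hcount := measureReal_pi_uniformOn_univ_setOf fun shat : Fin N → S =>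
    1 - L.penalty φ e N δ πs ≤ L.accuracy (pihat shat) πs
  rw [Fintype.card_fin] at hcount
  rw [← hcount]
  refine (hfs.le_measureReal_forall_trainAccuracy_sub_penalty_le φ e πs hN hδ0 hδ1).trans
    (measureReal_mono fun shat hgood => ?_)
  calc 1 - L.penalty φ e N δ πs
      = L.trainAccuracy shat πs πs - L.penalty φ e N δ πs := by
        rw [L.trainAccuracy_self hN]
    _ ≤ L.trainAccuracy shat (pihat shat) πs - L.penalty φ e N δ (pihat shat) := hpihat shat
    _ ≤ L.accuracy (pihat shat) πs := hgood (pihat shat)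

/-- Optimality gap lower-bounds accuracy: fix a prior policy `φ` and let
`G(φ;π*) = −2χ_φ(π*) + log₂ e`. If `π̂` (a function of the training draw) maximizes
`α_train(π;π*) − √((−2χ_φ(π) + log₂ e + log₂(1/δ))/(2N))` over all d-policies, then
with probability at least `1 − δ` over the i.i.d. uniform draw of the training
contexts, `α(π̂;π*) ≥ 1 − √((2G(φ;π*) + 2 log₂(1/δ))/N)`. -/
theorem optimality_gap_lower_bounds_accuracy {M S : Type} [AddCommMonoid M]
    [DecidableEq M] [Fintype S] [DecidableEq S] [Nonempty S] (L : LearningSystem M S)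
    (hfs : L.FullSupport) (φ : M) {k : ℕ} (e : Fin k ≃ S) (πs : L.DPolicy)
    (N : ℕ) (hN : 1 ≤ N) (δ : ℝ) (hδ0 : 0 < δ) (hδ1 : δ < 1)
    (pihat : (Fin N → S) → L.DPolicy)
    (hpihat : ∀ shat : Fin N → S, ∀ π : L.DPolicy,
      L.trainAccuracy shat π πs -
          Real.sqrt ((-2 * L.cohAlong φ π ⇑e + Real.logb 2 (Real.exp 1) +
            Real.logb 2 (1 / δ)) / (2 * (N : ℝ))) ≤
        L.trainAccuracy shat (pihat shat) πs -
          Real.sqrt ((-2 * L.cohAlong φ (pihat shat) ⇑e + Real.logb 2 (Real.exp 1) +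
            Real.logb 2 (1 / δ)) / (2 * (N : ℝ)))) :
    1 - δ ≤
      (Nat.card {shat : Fin N → S //
          1 - Real.sqrt ((2 * (-2 * L.cohAlong φ πs ⇑e + Real.logb 2 (Real.exp 1)) +
              2 * Real.logb 2 (1 / δ)) / (N : ℝ)) ≤
            L.accuracy (pihat shat) πs} : ℝ) /
        ((Fintype.card S : ℝ) ^ N) := by
  refine (optimality_gap_lower_bounds_accuracy_general L hfs φ e πs (by lia) hδ0 hδ1.le pihat
    fun shat => hpihat shat πs).trans ?_
  gcongr
  exact Nat.card_mono (Set.toFinite _) fun _ h =>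
    (sub_le_sub_left (L.penalty_le_sqrt φ e N δ πs) (1 : ℝ)).trans h
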